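/- Let f_1, f_2, … be a sequence of automorphisms of ℂ^k, each fixing the origin, and let a, b ∈ ℝ satisfy 0 < a < b < 1 and b² < a. Suppose that for every n and every z in the open unit ball B, a‖z‖ ≤ ‖f_n(z)‖ ≤ b‖z‖. Then the basin of attraction {z ∈ ℂ^k : f(n)(z) → 0} is biholomorphic to ℂ^k. -/

import Mathlib

open Metric Filter Topology

noncomputable section

/-- `ℂ^k` with the Euclidean norm. -/
abbrev Ck (k : ℕ) := EuclideanSpace ℂ (Fin k)

/-- `seqComp f n = f_{n-1} ∘ ⋯ ∘ f_0` (the composition of the first `n` maps). -/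
def seqComp {α : Type*} (f : ℕ → α → α) : ℕ → α → α
  | 0 => id
  | n + 1 => f n ∘ seqComp f n

/-- An automorphism of `ℂ^k`: a bijective holomorphic map with holomorphic inverse. -/
def IsAutomorphism {k : ℕ} (F : Ck k → Ck k) : Prop :=
  Differentiable ℂ F ∧ ∃ Finv : Ck k → Ck k, Differentiable ℂ Finv ∧
    Function.LeftInverse Finv F ∧ Function.RightInverse Finv F

/-- A set `Ω ⊆ ℂ^k` is biholomorphic to `ℂ^k`. -/
def BiholoToC {k : ℕ} (Ω : Set (Ck k)) : Prop :=
  ∃ (Ψ Φ : Ck k → Ck k),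
    DifferentiableOn ℂ Ψ Ω ∧ Differentiable ℂ Φ ∧
    (∀ w, Φ w ∈ Ω) ∧ (∀ z ∈ Ω, Φ (Ψ z) = z) ∧ (∀ w, Ψ (Φ w) = w)

/-!
Let `A n` be the linear part of `f n` at the origin. By the Schwarz lemma `f n - A n` is quadratic
on the unit ball, and `‖f(n) z‖ ≤ bⁿ ‖z‖`, so the maps `(A (n - 1) ⋯ A 0)⁻¹ ∘ f(n)` differ from one
step to the next by `O((b² / a)ⁿ ‖z‖²)` and converge to a holomorphic map `Ψ`. On a ball whose
radius does not depend on where the sequence starts, the limit is a small perturbation of the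
identity, hence a biholomorphic chart onto an open set containing the ball of half that radius.
Since `Ψ = (A (m - 1) ⋯ A 0)⁻¹ ∘ Ψₘ ∘ f(m)`, where `Ψₘ` is the limit for the sequence started at
`m`, `Ψ` is biholomorphic on the preimage of that ball under `f(m)`; these preimages exhaust the
basin, and their images exhaust the space because the products `A (m - 1) ⋯ A 0` tend to zero.
-/

section OrderedProduct

/-- The ordered product `g (n - 1) * ⋯ * g 0` in a monoid. In the groups `X ≃ₜ X` and
`E ≃L[𝕜] E` it is `seqComp g n`, bundled as an equivalence. -/
def orderedProd {G : Type*} [Monoid G] (g : ℕ → G) : ℕ → G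
  | 0 => 1
  | n + 1 => g n * orderedProd g n

theorem orderedProd_add {G : Type*} [Monoid G] (g : ℕ → G) (m n : ℕ) :
    orderedProd g (m + n) = orderedProd (fun i => g (m + i)) n * orderedProd g m := by
  induction n with
  | zero => simp only [orderedProd, add_zero, one_mul]
  | succ n ih => rw [← add_assoc, orderedProd, orderedProd, ih, mul_assoc]

theorem seqComp_add {α : Type*} (f : ℕ → α → α) (m n : ℕ) (z : α) :
    seqComp f (m + n) z = seqComp (fun i => f (m + i)) n (seqComp f m z) := by
  induction n with
  | zero => rfl
  | succ n ih => rw [← add_assoc, seqComp, seqComp, Function.comp_apply, ih, Function.comp_apply]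

theorem coe_orderedProd {X : Type*} [TopologicalSpace X] (f : ℕ → X ≃ₜ X) (n : ℕ) :
    ⇑(orderedProd f n) = seqComp (fun i => f i) n := by
  induction n with
  | zero => rfl
  | succ n ih => rw [seqComp, ← ih]; rfl

variable {𝕜 E : Type*} [NontriviallyNormedField 𝕜] [NormedAddCommGroup E] [NormedSpace 𝕜 E]

theorem differentiable_orderedProd {f : ℕ → E ≃ₜ E} (hf : ∀ n, Differentiable 𝕜 (f n)) (n : ℕ) :
    Differentiable 𝕜 ⇑(orderedProd f n) := by
  induction n with
  | zero => exact differentiable_id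
  | succ n ih => exact (hf n).comp ih

theorem differentiable_orderedProd_symm {f : ℕ → E ≃ₜ E}
    (hf : ∀ n, Differentiable 𝕜 (f n).symm) (n : ℕ) :
    Differentiable 𝕜 (orderedProd f n).symm := by
  induction n with
  | zero => exact differentiable_id
  | succ n ih => exact ih.comp (hf n)

theorem norm_orderedProd_le {A : ℕ → E ≃L[𝕜] E} {b : ℝ}
    (hA : ∀ n, ‖(A n : E →L[𝕜] E)‖ ≤ b) (n : ℕ) :
    ‖(↑(orderedProd A n) : E →L[𝕜] E)‖ ≤ b ^ n := by
  induction n with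
  | zero => exact (ContinuousLinearMap.norm_id_le).trans_eq (pow_zero b).symm
  | succ n ih =>
    have hb : 0 ≤ b := (norm_nonneg _).trans (hA n)
    calc ‖(A n : E →L[𝕜] E).comp (↑(orderedProd A n) : E →L[𝕜] E)‖
        ≤ ‖(A n : E →L[𝕜] E)‖ * ‖(↑(orderedProd A n) : E →L[𝕜] E)‖ :=
          ContinuousLinearMap.opNorm_comp_le _ _
      _ ≤ b * b ^ n := by gcongr; exact hA n
      _ = b ^ (n + 1) := (pow_succ' b n).symm

theorem norm_orderedProd_symm_le {A : ℕ → E ≃L[𝕜] E} {c : ℝ}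
    (hA : ∀ n, ‖((A n).symm : E →L[𝕜] E)‖ ≤ c) (n : ℕ) :
    ‖((orderedProd A n).symm : E →L[𝕜] E)‖ ≤ c ^ n := by
  induction n with
  | zero => exact (ContinuousLinearMap.norm_id_le).trans_eq (pow_zero c).symm
  | succ n ih =>
    have hc : 0 ≤ c := (norm_nonneg _).trans (hA n)
    calc ‖((orderedProd A n).symm : E →L[𝕜] E).comp ((A n).symm : E →L[𝕜] E)‖
        ≤ ‖((orderedProd A n).symm : E →L[𝕜] E)‖ * ‖((A n).symm : E →L[𝕜] E)‖ :=
          ContinuousLinearMap.opNorm_comp_le _ _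
      _ ≤ c ^ n * c := by gcongr; exact hA n
      _ = c ^ (n + 1) := (pow_succ c n).symm

end OrderedProduct

section Basin

variable {E : Type*} [SeminormedAddCommGroup E]

/-- The basin of attraction of the origin under the compositions `seqComp f n`. -/
def basin (f : ℕ → E → E) : Set E :=
  {z | Tendsto (fun n => seqComp f n z) atTop (𝓝 0)}

variable {f : ℕ → E → E} {b : ℝ}

theorem norm_seqComp_le (hb₀ : 0 ≤ b) (hb₁ : b ≤ 1)
    (hf : ∀ n, ∀ z ∈ ball (0 : E) 1, ‖f n z‖ ≤ b * ‖z‖) (n : ℕ) {z : E}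
    (hz : z ∈ ball (0 : E) 1) : ‖seqComp f n z‖ ≤ b ^ n * ‖z‖ := by
  induction n with
  | zero => simp [seqComp]
  | succ n ih =>
    have hball : seqComp f n z ∈ ball (0 : E) 1 := by
      rw [mem_ball_zero_iff] at hz ⊢
      exact ih.trans_lt ((mul_le_of_le_one_left (norm_nonneg z) (pow_le_one₀ hb₀ hb₁)).trans_lt hz)
    calc ‖f n (seqComp f n z)‖ ≤ b * ‖seqComp f n z‖ := hf n _ hball
      _ ≤ b * (b ^ n * ‖z‖) := by gcongr
      _ = b ^ (n + 1) * ‖z‖ := by ring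

theorem mapsTo_seqComp_ball (hb₀ : 0 ≤ b) (hb₁ : b ≤ 1)
    (hf : ∀ n, ∀ z ∈ ball (0 : E) 1, ‖f n z‖ ≤ b * ‖z‖) (n : ℕ) :
    Set.MapsTo (seqComp f n) (ball 0 1) (ball 0 1) := by
  intro z hz
  have hle : b ^ n * ‖z‖ ≤ ‖z‖ := mul_le_of_le_one_left (norm_nonneg z) (pow_le_one₀ hb₀ hb₁)
  rw [mem_ball_zero_iff]
  exact ((norm_seqComp_le hb₀ hb₁ hf n hz).trans hle).trans_lt (mem_ball_zero_iff.1 hz)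

theorem mem_basin_of_seqComp_mem_ball (hb₀ : 0 ≤ b) (hb₁ : b < 1)
    (hf : ∀ n, ∀ z ∈ ball (0 : E) 1, ‖f n z‖ ≤ b * ‖z‖) {z : E} {m : ℕ}
    (hz : seqComp f m z ∈ ball (0 : E) 1) : z ∈ basin f := by
  have hgeom : Tendsto (fun n => b ^ n * ‖seqComp f m z‖) atTop (𝓝 0) := by
    simpa using (tendsto_pow_atTop_nhds_zero_of_lt_one hb₀ hb₁).mul_const ‖seqComp f m z‖
  refine (tendsto_add_atTop_iff_nat m).1 (squeeze_zero_norm (fun n => ?_) hgeom)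
  rw [add_comm n m, seqComp_add]
  exact norm_seqComp_le hb₀ hb₁.le (fun i => hf (m + i)) n hz

end Basin

section QuadraticEstimates

variable {E F : Type*} [NormedAddCommGroup E] [NormedSpace ℂ E]
  [NormedAddCommGroup F] [NormedSpace ℂ F]

theorem norm_fderiv_le_of_norm_le_mul {g : E → F} {L : E →L[ℂ] F} {b : ℝ} (hb : 0 ≤ b)
    (hL : HasFDerivAt g L 0) (hgb : ∀ z ∈ ball (0 : E) 1, ‖g z‖ ≤ b * ‖z‖) : ‖L‖ ≤ b := by
  have hg0 : g 0 = 0 := by simpa using hgb 0 (mem_ball_self one_pos)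
  refine hL.le_of_lip' hb ?_
  filter_upwards [ball_mem_nhds (0 : E) one_pos] with z hz
  simpa [hg0] using hgb z hz

theorem norm_sub_fderiv_le_mul_sq {g : E → F} {L : E →L[ℂ] F} {b : ℝ} (hb : 0 ≤ b)
    (hg : DifferentiableOn ℂ g (ball 0 1)) (hL : HasFDerivAt g L 0)
    (hgb : ∀ z ∈ ball (0 : E) 1, ‖g z‖ ≤ b * ‖z‖) {z : E} (hz : z ∈ ball (0 : E) 1) :
    ‖g z - L z‖ ≤ 2 * b * ‖z‖ ^ 2 := by
  have hg0 : g 0 = 0 := by simpa using hgb 0 (mem_ball_self one_pos)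
  have hLb : ‖L‖ ≤ b := norm_fderiv_le_of_norm_le_mul hb hL hgb
  have hmaps : Set.MapsTo (fun w => g w - L w) (ball 0 1) (closedBall (g 0 - L 0) (2 * b)) := by
    intro w hw
    have hw1 : ‖w‖ ≤ 1 := (mem_ball_zero_iff.1 hw).le
    rw [hg0, map_zero, sub_zero, mem_closedBall_zero_iff]
    calc ‖g w - L w‖ ≤ ‖g w‖ + ‖L w‖ := norm_sub_le _ _
      _ ≤ b * ‖w‖ + b * ‖w‖ := add_le_add (hgb w hw) (L.le_of_opNorm_le hLb w)
      _ ≤ 2 * b := by nlinarith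
  have hlittle : (fun w => g w - L w - (g 0 - L 0)) =o[𝓝 0] fun w => ‖w - 0‖ ^ 1 := by
    simpa [hg0] using hL.isLittleO.norm_right
  simpa [hg0] using Complex.dist_le_mul_div_pow_of_mapsTo_ball_of_isLittleO
    (hg.sub L.differentiableOn) hmaps hlittle hz

theorem norm_fderiv_le_of_norm_le_mul_sq {u : E → F} {M r : ℝ} (hM : 0 ≤ M)
    (hu : DifferentiableOn ℂ u (ball 0 (2 * r)))
    (hub : ∀ z ∈ ball (0 : E) (2 * r), ‖u z‖ ≤ M * ‖z‖ ^ 2) {z : E} (hz : z ∈ ball (0 : E) r) :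
    ‖fderiv ℂ u z‖ ≤ 8 * r * M := by
  have hr : 0 < r := pos_of_mem_ball hz
  have hsub : ball z r ⊆ ball 0 (2 * r) := by
    refine ball_subset_ball' ?_
    rw [mem_ball] at hz
    linarith
  have hsup : ∀ y ∈ ball z r, ‖u y‖ ≤ M * (2 * r) ^ 2 := by
    intro y hy
    have hy' : ‖y‖ ≤ 2 * r := (mem_ball_zero_iff.1 (hsub hy)).le
    exact (hub y (hsub hy)).trans (by gcongr)
  have hmaps : Set.MapsTo u (ball z r) (closedBall (u z) (8 * r * M * r)) := by
    intro y hy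
    rw [mem_closedBall, dist_eq_norm]
    calc ‖u y - u z‖ ≤ ‖u y‖ + ‖u z‖ := norm_sub_le _ _
      _ ≤ M * (2 * r) ^ 2 + M * (2 * r) ^ 2 :=
        add_le_add (hsup y hy) (hsup z (mem_ball_self hr))
      _ = 8 * r * M * r := by ring
  simpa [hr.ne'] using Complex.norm_fderiv_le_div_of_mapsTo_ball (hu.mono hsub) hmaps hr

variable [CompleteSpace F] {u : ℕ → E → F} {M : ℕ → ℝ} {r : ℝ}

theorem hasFDerivAt_tsum_of_norm_le_mul_sq (hM₀ : ∀ n, 0 ≤ M n) (hM : Summable M)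
    (hu : ∀ n, DifferentiableOn ℂ (u n) (ball 0 (2 * r)))
    (hub : ∀ n, ∀ z ∈ ball (0 : E) (2 * r), ‖u n z‖ ≤ M n * ‖z‖ ^ 2) {z : E}
    (hz : z ∈ ball (0 : E) r) :
    HasFDerivAt (fun y => ∑' n, u n y) (∑' n, fderiv ℂ (u n) z) z := by
  have hr : 0 < r := pos_of_mem_ball hz
  have hsub : ball (0 : E) r ⊆ ball 0 (2 * r) := ball_subset_ball (by linarith)
  have hu0 : ∀ n, u n 0 = 0 := fun n => by simpa using hub n 0 (mem_ball_self (by positivity))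
  exact hasFDerivAt_tsum_of_isPreconnected (hM.mul_left (8 * r)) isOpen_ball
    (convex_ball _ _).isPreconnected
    (fun n y hy => ((hu n).differentiableAt (isOpen_ball.mem_nhds (hsub hy))).hasFDerivAt)
    (fun n y hy => norm_fderiv_le_of_norm_le_mul_sq (hM₀ n) (hu n) (hub n) hy)
    (mem_ball_self hr) (by simp only [hu0, summable_zero]) hz

theorem norm_fderiv_tsum_le_of_norm_le_mul_sq (hM₀ : ∀ n, 0 ≤ M n) (hM : Summable M)
    (hu : ∀ n, DifferentiableOn ℂ (u n) (ball 0 (2 * r)))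
    (hub : ∀ n, ∀ z ∈ ball (0 : E) (2 * r), ‖u n z‖ ≤ M n * ‖z‖ ^ 2) {z : E}
    (hz : z ∈ ball (0 : E) r) :
    ‖fderiv ℂ (fun y => ∑' n, u n y) z‖ ≤ 8 * r * ∑' n, M n := by
  rw [(hasFDerivAt_tsum_of_norm_le_mul_sq hM₀ hM hu hub hz).fderiv]
  exact tsum_of_norm_bounded (hM.hasSum.mul_left (8 * r))
    fun n => norm_fderiv_le_of_norm_le_mul_sq (hM₀ n) (hu n) (hub n) hz

end QuadraticEstimates

section Biholomorphic

variable {E F G : Type*} [NormedAddCommGroup E] [NormedSpace ℂ E]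
  [NormedAddCommGroup F] [NormedSpace ℂ F] [NormedAddCommGroup G] [NormedSpace ℂ G]

/-- An open partial homeomorphism that is holomorphic in both directions; the local charts of
the basin are of this kind. -/
structure IsBiholomorphic (e : OpenPartialHomeomorph E F) : Prop where
  differentiableOn : DifferentiableOn ℂ e e.source
  differentiableOn_symm : DifferentiableOn ℂ e.symm e.target

/-- The extension of `BiholoToC` from `ℂ^k` to complex normed spaces. -/
def BiholoToSpace (Ω : Set E) : Prop :=
  ∃ (Ψ Φ : E → E),
    DifferentiableOn ℂ Ψ Ω ∧ Differentiable ℂ Φ ∧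
    (∀ w, Φ w ∈ Ω) ∧ (∀ z ∈ Ω, Φ (Ψ z) = z) ∧ (∀ w, Ψ (Φ w) = w)

namespace IsBiholomorphic

theorem homeomorph_trans {e : OpenPartialHomeomorph F G} (he : IsBiholomorphic e) {h : E ≃ₜ F}
    (hh : Differentiable ℂ h) (hh_symm : Differentiable ℂ h.symm) :
    IsBiholomorphic (h.transOpenPartialHomeomorph e) where
  differentiableOn := he.differentiableOn.comp hh.differentiableOn fun _ hz => hz
  differentiableOn_symm := hh_symm.comp_differentiableOn he.differentiableOn_symm

theorem trans_continuousLinearEquiv {e : OpenPartialHomeomorph E F} (he : IsBiholomorphic e)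
    (L : F ≃L[ℂ] G) : IsBiholomorphic (e.transHomeomorph L.toHomeomorph) where
  differentiableOn := L.differentiable.comp_differentiableOn he.differentiableOn
  differentiableOn_symm :=
    he.differentiableOn_symm.comp L.symm.differentiable.differentiableOn fun _ hw => hw

end IsBiholomorphic

-- Any two points of `Ω` lie in a common chart domain, so injectivity of `Ψ` is local.
theorem biholoToSpace_of_charts {ι : Type*} {l : Filter ι} [l.NeBot] {Ω : Set E} (Ψ : E → E)
    (e : ι → OpenPartialHomeomorph E E) (he : ∀ i, IsBiholomorphic (e i))
    (heΨ : ∀ i, Set.EqOn Ψ (e i) (e i).source) (hsub : ∀ i, (e i).source ⊆ Ω)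
    (hcover : ∀ z ∈ Ω, ∀ᶠ i in l, z ∈ (e i).source) (hsurj : ∀ w, ∃ i, w ∈ (e i).target) :
    BiholoToSpace Ω := by
  have hinj : Set.InjOn Ψ Ω := by
    intro z hz z' hz' h
    obtain ⟨i, hi, hi'⟩ := ((hcover z hz).and (hcover z' hz')).exists
    rw [heΨ i hi, heΨ i hi'] at h
    exact (e i).injOn hi hi' h
  have hsymm : ∀ i, ∀ w ∈ (e i).target, (e i).symm w ∈ Ω ∧ Ψ ((e i).symm w) = w := fun i w hw =>
    have hmem := (e i).map_target hw
    ⟨hsub i hmem, (heΨ i hmem).trans ((e i).right_inv hw)⟩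
  choose i hi using hsurj
  let Φ : E → E := fun w => (e (i w)).symm w
  have hΦ : ∀ w, Φ w ∈ Ω ∧ Ψ (Φ w) = w := fun w => hsymm (i w) w (hi w)
  refine ⟨Ψ, Φ, fun z hz => ?_, fun w => ?_, fun w => (hΦ w).1,
    fun z hz => hinj (hΦ _).1 hz (hΦ _).2, fun w => (hΦ w).2⟩
  · obtain ⟨j, hj⟩ := (hcover z hz).exists
    have hnhds := (e j).open_source.mem_nhds hj
    exact (((he j).differentiableOn.differentiableAt hnhds).congr_of_eventuallyEq
      ((heΨ j).eventuallyEq_of_mem hnhds)).differentiableWithinAt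
  · have hnhds := (e (i w)).open_target.mem_nhds (hi w)
    have hΦeq : Set.EqOn Φ (e (i w)).symm (e (i w)).target := fun w' hw' =>
      hinj (hΦ w').1 (hsymm _ w' hw').1 ((hΦ w').2.trans (hsymm _ w' hw').2.symm)
    exact ((he (i w)).differentiableOn_symm.differentiableAt hnhds).congr_of_eventuallyEq
      (hΦeq.eventuallyEq_of_mem hnhds)

end Biholomorphic

section PerturbationOfIdentity

open scoped NNReal

theorem isInvertible_id_add {𝕜 E : Type*} [NontriviallyNormedField 𝕜] [NormedAddCommGroup E]
    [NormedSpace 𝕜 E] [CompleteSpace E] {D : E →L[𝕜] E} (hD : ‖D‖ < 1) :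
    (ContinuousLinearMap.id 𝕜 E + D).IsInvertible := by
  refine ⟨ContinuousLinearEquiv.unitsEquiv 𝕜 E (Units.oneSub (-D) (by rwa [norm_neg])), ?_⟩
  ext v
  simp

theorem approximatesLinearOn_id_add {𝕜 E : Type*} [RCLike 𝕜] [NormedAddCommGroup E]
    [NormedSpace 𝕜 E] [NormedSpace ℝ E] {S : E → E} {s : Set E} {κ : ℝ≥0} (hs : IsOpen s)
    (hconv : Convex ℝ s) (hS : DifferentiableOn 𝕜 S s) (hS' : ∀ z ∈ s, ‖fderiv 𝕜 S z‖ ≤ κ) :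
    ApproximatesLinearOn (fun z => z + S z)
      (ContinuousLinearEquiv.refl 𝕜 E : E →L[𝕜] E) s κ := by
  intro x hx y hy
  have hdiff : x + S x - (y + S y) - (x - y) = S x - S y := by abel
  simpa only [ContinuousLinearEquiv.coe_refl, ContinuousLinearMap.id_apply, hdiff] using
    hconv.norm_image_sub_le_of_norm_fderiv_le
      (fun z hz => hS.differentiableAt (hs.mem_nhds hz)) hS' hy hx

variable {E : Type*} [NormedAddCommGroup E] [NormedSpace ℂ E] [CompleteSpace E]

theorem exists_isBiholomorphic_id_add {S : E → E} {x : E} {r : ℝ} {κ : ℝ≥0} (hκ : κ < 1)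
    (hS : DifferentiableOn ℂ S (ball x r)) (hS' : ∀ z ∈ ball x r, ‖fderiv ℂ S z‖ ≤ κ) :
    ∃ e : OpenPartialHomeomorph E E, (⇑e = fun z => z + S z) ∧ e.source = ball x r ∧
      ball (x + S x) ((1 - κ) * r) ⊆ e.target ∧ IsBiholomorphic e := by
  have happ := approximatesLinearOn_id_add isOpen_ball (convex_ball x r) hS hS'
  have hnorm : Nontrivial E → ‖((ContinuousLinearEquiv.refl ℂ E).symm : E →L[ℂ] E)‖₊ = 1 :=
    fun _ => nnnorm_one
  have hc : Subsingleton E ∨ κ < ‖((ContinuousLinearEquiv.refl ℂ E).symm : E →L[ℂ] E)‖₊⁻¹ :=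
    (subsingleton_or_nontrivial E).imp_right fun h => by rwa [hnorm h, inv_one]
  let e := happ.toOpenPartialHomeomorph _ _ hc isOpen_ball
  have hderiv : ∀ z ∈ ball x r, ∃ L : E ≃L[ℂ] E, HasFDerivAt e (L : E →L[ℂ] E) z := by
    intro z hz
    obtain ⟨L, hL⟩ := isInvertible_id_add ((hS' z hz).trans_lt (mod_cast hκ))
    exact ⟨L, hL ▸ (hasFDerivAt_id z).add
      (hS.differentiableAt (isOpen_ball.mem_nhds hz)).hasFDerivAt⟩
  refine ⟨e, rfl, rfl, fun w hw => ?_, fun z hz => ?_, fun w hw => ?_⟩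
  · have hκ' : (0 : ℝ) < 1 - κ := sub_pos.2 (mod_cast hκ)
    rcases subsingleton_or_nontrivial E with _ | hE
    · have hr : 0 < r := pos_of_mul_pos_right (pos_of_mem_ball hw) hκ'.le
      exact ⟨x, mem_ball_self hr, Subsingleton.elim _ _⟩
    have hρ : dist w (x + S x) / (1 - κ) < r := (div_lt_iff₀' hκ').2 hw
    refine happ.closedBall_subset_target hc isOpen_ball (b := x) (by positivity)
      (closedBall_subset_ball hρ) ?_
    rw [hnorm hE, inv_one, NNReal.coe_one, mul_div_cancel₀ _ hκ'.ne']
    exact mem_closedBall.2 le_rfl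
  · obtain ⟨L, hL⟩ := hderiv z hz
    exact hL.differentiableAt.differentiableWithinAt
  · obtain ⟨L, hL⟩ := hderiv (e.symm w) (e.map_target hw)
    exact (e.hasFDerivAt_symm hw hL).differentiableAt.differentiableWithinAt

end PerturbationOfIdentity

section ContractingSequence

theorem exists_radius_of_sq_mul_lt_one {b c : ℝ} (hb : 0 ≤ b) (hc : 0 ≤ c) (hbc : b ^ 2 * c < 1) :
    ∃ r > 0, 2 * r ≤ 1 ∧ 8 * r * (2 * b * c * (1 - b ^ 2 * c)⁻¹) ≤ 1 / 2 := by
  have hgap : 0 < 1 - b ^ 2 * c := sub_pos.2 hbc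
  refine ⟨(1 - b ^ 2 * c) / (32 * (1 + b * c)), by positivity, ?_, ?_⟩
  · have : 0 ≤ b * c := by positivity
    have : 0 ≤ b ^ 2 * c := by positivity
    rw [← mul_div_assoc, div_le_one (by positivity)]
    linarith
  · field_simp
    linarith

variable {E : Type*} [NormedAddCommGroup E] [NormedSpace ℂ E]

/-- The sequence `f` contracts the unit ball by the factor `b`, and its linear parts `A n` at the
origin expand by at most `c` backwards. The hypothesis `b² < a` of the theorem becomes
`b² c < 1` with `c = a⁻¹`. -/
structure IsContractingSequence (f : ℕ → E → E) (A : ℕ → E ≃L[ℂ] E) (b c : ℝ) : Prop where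
  nonneg : 0 ≤ b
  lt_one : b < 1
  differentiableOn : ∀ n, DifferentiableOn ℂ (f n) (ball 0 1)
  norm_le : ∀ n, ∀ z ∈ ball (0 : E) 1, ‖f n z‖ ≤ b * ‖z‖
  hasFDerivAt : ∀ n, HasFDerivAt (f n) (A n : E →L[ℂ] E) 0
  norm_symm_le : ∀ n, ‖((A n).symm : E →L[ℂ] E)‖ ≤ c

/-- The maps `(A (n - 1) ∘ ⋯ ∘ A 0)⁻¹ ∘ f (n - 1) ∘ ⋯ ∘ f 0`, whose limit straightens the basin
to the whole space. -/
def normalizedComp (f : ℕ → E → E) (A : ℕ → E ≃L[ℂ] E) (n : ℕ) (z : E) : E :=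
  (orderedProd A n).symm (seqComp f n z)

theorem normalizedComp_add (f : ℕ → E → E) (A : ℕ → E ≃L[ℂ] E) (m n : ℕ) (z : E) :
    normalizedComp f A (m + n) z = (orderedProd A m).symm
      (normalizedComp (fun i => f (m + i)) (fun i => A (m + i)) n (seqComp f m z)) := by
  rw [normalizedComp, normalizedComp, orderedProd_add, seqComp_add]
  rfl

theorem normalizedComp_succ_sub (f : ℕ → E → E) (A : ℕ → E ≃L[ℂ] E) (n : ℕ) (z : E) :
    normalizedComp f A (n + 1) z - normalizedComp f A n z =
      (orderedProd A (n + 1)).symm (f n (seqComp f n z) - A n (seqComp f n z)) := by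
  have hcancel : (orderedProd A (n + 1)).symm (A n (seqComp f n z)) = normalizedComp f A n z :=
    congrArg (orderedProd A n).symm ((A n).symm_apply_apply _)
  rw [map_sub, hcancel]
  rfl

theorem normalizedComp_eq_add_sum (f : ℕ → E → E) (A : ℕ → E ≃L[ℂ] E) (n : ℕ) (z : E) :
    normalizedComp f A n z =
      z + ∑ i ∈ Finset.range n, (normalizedComp f A (i + 1) z - normalizedComp f A i z) := by
  have hzero : normalizedComp f A 0 z = z := rfl
  rw [Finset.sum_range_sub (normalizedComp f A · z), hzero, add_sub_cancel]

/-- The deviation from the identity of the limit of `normalizedComp f A n`, as a telescoping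
series. -/
def linearizationCorrection (f : ℕ → E → E) (A : ℕ → E ≃L[ℂ] E) (z : E) : E :=
  ∑' n, (normalizedComp f A (n + 1) z - normalizedComp f A n z)

namespace IsContractingSequence

variable {f : ℕ → E → E} {A : ℕ → E ≃L[ℂ] E} {b c : ℝ}

theorem shift (H : IsContractingSequence f A b c) (m : ℕ) :
    IsContractingSequence (fun i => f (m + i)) (fun i => A (m + i)) b c where
  nonneg := H.nonneg
  lt_one := H.lt_one
  differentiableOn n := H.differentiableOn (m + n)
  norm_le n := H.norm_le (m + n)
  hasFDerivAt n := H.hasFDerivAt (m + n)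
  norm_symm_le n := H.norm_symm_le (m + n)

theorem const_nonneg (H : IsContractingSequence f A b c) : 0 ≤ c :=
  (norm_nonneg _).trans (H.norm_symm_le 0)

theorem norm_linear_le (H : IsContractingSequence f A b c) (n : ℕ) :
    ‖(A n : E →L[ℂ] E)‖ ≤ b :=
  norm_fderiv_le_of_norm_le_mul H.nonneg (H.hasFDerivAt n) (H.norm_le n)

theorem mapsTo_seqComp_ball (H : IsContractingSequence f A b c) (n : ℕ) :
    Set.MapsTo (seqComp f n) (ball 0 1) (ball 0 1) :=
  _root_.mapsTo_seqComp_ball H.nonneg H.lt_one.le H.norm_le n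

theorem differentiableOn_seqComp (H : IsContractingSequence f A b c) (n : ℕ) :
    DifferentiableOn ℂ (seqComp f n) (ball 0 1) := by
  induction n with
  | zero => exact differentiableOn_id
  | succ n ih => exact (H.differentiableOn n).comp ih (H.mapsTo_seqComp_ball n)

theorem differentiableOn_normalizedComp (H : IsContractingSequence f A b c) (n : ℕ) :
    DifferentiableOn ℂ (normalizedComp f A n) (ball 0 1) :=
  (orderedProd A n).symm.differentiable.comp_differentiableOn (H.differentiableOn_seqComp n)

theorem norm_normalizedComp_succ_sub_le (H : IsContractingSequence f A b c) (n : ℕ) {z : E}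
    (hz : z ∈ ball (0 : E) 1) :
    ‖normalizedComp f A (n + 1) z - normalizedComp f A n z‖ ≤
      2 * b * c * (b ^ 2 * c) ^ n * ‖z‖ ^ 2 := by
  have hb := H.nonneg
  have hc := H.const_nonneg
  have hquad := norm_sub_fderiv_le_mul_sq hb (H.differentiableOn n) (H.hasFDerivAt n)
    (H.norm_le n) (H.mapsTo_seqComp_ball n hz)
  rw [normalizedComp_succ_sub]
  calc ‖(orderedProd A (n + 1)).symm (f n (seqComp f n z) - A n (seqComp f n z))‖
      ≤ c ^ (n + 1) * ‖f n (seqComp f n z) - A n (seqComp f n z)‖ :=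
        ContinuousLinearMap.le_of_opNorm_le _ (norm_orderedProd_symm_le H.norm_symm_le (n + 1)) _
    _ ≤ c ^ (n + 1) * (2 * b * ‖seqComp f n z‖ ^ 2) := by gcongr; exact hquad
    _ ≤ c ^ (n + 1) * (2 * b * (b ^ n * ‖z‖) ^ 2) := by
        gcongr
        exact norm_seqComp_le hb H.lt_one.le H.norm_le n hz
    _ = 2 * b * c * (b ^ 2 * c) ^ n * ‖z‖ ^ 2 := by ring

theorem exists_linear_image_mem_ball (H : IsContractingSequence f A b c) (w : E) {ε : ℝ}
    (hε : 0 < ε) : ∃ m, orderedProd A m w ∈ ball (0 : E) ε := by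
  have hgeom : Tendsto (fun n => b ^ n * ‖w‖) atTop (𝓝 0) := by
    simpa using (tendsto_pow_atTop_nhds_zero_of_lt_one H.nonneg H.lt_one).mul_const ‖w‖
  obtain ⟨m, hm⟩ := (hgeom.eventually_lt_const hε).exists
  refine ⟨m, mem_ball_zero_iff.2 (lt_of_le_of_lt ?_ hm)⟩
  exact ContinuousLinearMap.le_of_opNorm_le _ (norm_orderedProd_le H.norm_linear_le m) w

theorem linearizationCorrection_zero (H : IsContractingSequence f A b c) :
    linearizationCorrection f A 0 = 0 := by
  have hincr : ∀ n, normalizedComp f A (n + 1) 0 - normalizedComp f A n 0 = 0 := fun n => by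
    simpa using H.norm_normalizedComp_succ_sub_le n (mem_ball_self one_pos)
  simp only [linearizationCorrection, hincr, tsum_zero]

theorem hasSum_increment_bound (H : IsContractingSequence f A b c) (hbc : b ^ 2 * c < 1) :
    HasSum (fun n => 2 * b * c * (b ^ 2 * c) ^ n) (2 * b * c * (1 - b ^ 2 * c)⁻¹) :=
  (hasSum_geometric_of_lt_one (mul_nonneg (sq_nonneg b) H.const_nonneg) hbc).mul_left _

variable [CompleteSpace E]

theorem tendsto_normalizedComp (H : IsContractingSequence f A b c) (hbc : b ^ 2 * c < 1) {z : E}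
    (hz : z ∈ ball (0 : E) 1) :
    Tendsto (fun n => normalizedComp f A n z) atTop (𝓝 (z + linearizationCorrection f A z)) := by
  have hsum : Summable fun n => normalizedComp f A (n + 1) z - normalizedComp f A n z :=
    Summable.of_norm_bounded ((H.hasSum_increment_bound hbc).summable.mul_right (‖z‖ ^ 2))
      fun n => H.norm_normalizedComp_succ_sub_le n hz
  exact (hsum.hasSum.tendsto_sum_nat.const_add z).congr
    fun n => (normalizedComp_eq_add_sum f A n z).symm

theorem linearizationCorrection_differentiableOn_and_norm_fderiv_le
    (H : IsContractingSequence f A b c) (hbc : b ^ 2 * c < 1) {r : ℝ} (hr : 2 * r ≤ 1) :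
    DifferentiableOn ℂ (linearizationCorrection f A) (ball 0 r) ∧
      ∀ z ∈ ball 0 r, ‖fderiv ℂ (linearizationCorrection f A) z‖ ≤
        8 * r * (2 * b * c * (1 - b ^ 2 * c)⁻¹) := by
  have hb := H.nonneg
  have hc := H.const_nonneg
  have hM := H.hasSum_increment_bound hbc
  have hM₀ : ∀ n, 0 ≤ 2 * b * c * (b ^ 2 * c) ^ n := fun n => by positivity
  have hsub : ball (0 : E) (2 * r) ⊆ ball 0 1 := ball_subset_ball hr
  have hdiff := fun n => ((H.differentiableOn_normalizedComp (n + 1)).sub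
    (H.differentiableOn_normalizedComp n)).mono hsub
  have hbound := fun n z hz => H.norm_normalizedComp_succ_sub_le n (z := z) (hsub hz)
  refine ⟨fun z hz => ?_, fun z hz => ?_⟩
  · exact (hasFDerivAt_tsum_of_norm_le_mul_sq hM₀ hM.summable hdiff hbound
      hz).differentiableAt.differentiableWithinAt
  · rw [← hM.tsum_eq]
    exact norm_fderiv_tsum_le_of_norm_le_mul_sq hM₀ hM.summable hdiff hbound hz

theorem exists_linearizing_chart (H : IsContractingSequence f A b c) (hbc : b ^ 2 * c < 1) {r : ℝ}
    (hr : 2 * r ≤ 1) (hr' : 8 * r * (2 * b * c * (1 - b ^ 2 * c)⁻¹) ≤ 1 / 2) :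
    ∃ e : OpenPartialHomeomorph E E, e.source = ball 0 r ∧ ball 0 (r / 2) ⊆ e.target ∧
      IsBiholomorphic e ∧
      ∀ z ∈ ball 0 r, Tendsto (fun n => normalizedComp f A n z) atTop (𝓝 (e z)) := by
  obtain ⟨hdiff, hderiv⟩ := H.linearizationCorrection_differentiableOn_and_norm_fderiv_le hbc hr
  obtain ⟨e, he, hsource, htarget, hbihol⟩ := exists_isBiholomorphic_id_add (κ := 1 / 2)
    (by norm_num) hdiff fun z hz => (hderiv z hz).trans (by simpa using hr')
  refine ⟨e, hsource, ?_, hbihol, fun z hz => ?_⟩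
  · refine Set.Subset.trans (ball_subset_ball' ?_) htarget
    rw [H.linearizationCorrection_zero, add_zero, dist_self]
    push_cast
    linarith
  · rw [he]
    have hr0 := pos_of_mem_ball hz
    exact H.tendsto_normalizedComp hbc (ball_subset_ball (by linarith) hz)

theorem biholoToSpace_basin {f : ℕ → E ≃ₜ E} (H : IsContractingSequence (fun n => f n) A b c)
    (hbc : b ^ 2 * c < 1) (hf : ∀ n, Differentiable ℂ (f n))
    (hf_symm : ∀ n, Differentiable ℂ (f n).symm) : BiholoToSpace (basin fun n => f n) := by
  obtain ⟨r, hr0, hr, hr'⟩ := exists_radius_of_sq_mul_lt_one H.nonneg H.const_nonneg hbc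
  choose e hsource htarget hbihol hlim using
    fun m => (H.shift m).exists_linearizing_chart hbc hr hr'
  let chart : ℕ → OpenPartialHomeomorph E E := fun m =>
    ((orderedProd f m).transOpenPartialHomeomorph (e m)).transHomeomorph
      (orderedProd A m).symm.toHomeomorph
  have hchart_source : ∀ m z, z ∈ (chart m).source ↔ seqComp (fun n => f n) m z ∈ ball 0 r := by
    intro m z
    rw [← hsource m, ← coe_orderedProd]
    rfl
  refine biholoToSpace_of_charts (l := atTop)
    (fun z => limUnder atTop fun n => normalizedComp (fun i => f i) A n z) chart
    (fun m => ((hbihol m).homeomorph_trans (differentiable_orderedProd hf m)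
      (differentiable_orderedProd_symm hf_symm m)).trans_continuousLinearEquiv _)
    (fun m z hz => ?_) (fun m z hz => ?_) (fun z hz => ?_) (fun w => ?_)
  · rw [hchart_source] at hz
    refine ((tendsto_add_atTop_iff_nat m).1 ?_).limUnder_eq
    have hval : chart m z = (orderedProd A m).symm (e m (seqComp (fun n => f n) m z)) := by
      rw [← coe_orderedProd]
      rfl
    rw [hval]
    refine (((orderedProd A m).symm.continuous.tendsto _).comp (hlim m _ hz)).congr fun n => ?_
    rw [add_comm n m, normalizedComp_add]
    rfl
  · rw [hchart_source] at hz
    exact mem_basin_of_seqComp_mem_ball H.nonneg H.lt_one H.norm_le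
      (ball_subset_ball (by linarith) hz)
  · simp only [hchart_source]
    exact hz.eventually (ball_mem_nhds 0 hr0)
  · obtain ⟨m, hm⟩ := H.exists_linear_image_mem_ball w (half_pos hr0)
    exact ⟨m, htarget m hm⟩

end IsContractingSequence

end ContractingSequence

section LinearPart

variable {𝕜 E F : Type*} [NontriviallyNormedField 𝕜] [NormedAddCommGroup E] [NormedSpace 𝕜 E]
  [NormedAddCommGroup F] [NormedSpace 𝕜 F]

theorem exists_continuousLinearEquiv_hasFDerivAt (h : E ≃ₜ F) {x : E}
    (hx : DifferentiableAt 𝕜 h x) (hx_symm : DifferentiableAt 𝕜 h.symm (h x)) :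
    ∃ L : E ≃L[𝕜] F, HasFDerivAt h (L : E →L[𝕜] F) x ∧
      HasFDerivAt h.symm (L.symm : F →L[𝕜] E) (h x) := by
  have hleft : (fderiv 𝕜 h.symm (h x)).comp (fderiv 𝕜 h x) = .id 𝕜 E := by
    rw [← fderiv_comp x hx_symm hx, h.symm_comp_self, fderiv_id]
  have hright : (fderiv 𝕜 h x).comp (fderiv 𝕜 h.symm (h x)) = .id 𝕜 F := by
    have hx' : DifferentiableAt 𝕜 h (h.symm (h x)) := by rwa [h.symm_apply_apply]
    have hcomp := fderiv_comp (h x) hx' hx_symm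
    rwa [h.self_comp_symm, fderiv_id, h.symm_apply_apply, eq_comm] at hcomp
  exact ⟨.equivOfInverse _ _ (DFunLike.congr_fun hleft) (DFunLike.congr_fun hright),
    hx.hasFDerivAt, hx_symm.hasFDerivAt⟩

-- The lower bound on `h` near the fixed point is an upper bound on `h.symm`.
theorem norm_symm_linear_le_inv {h : E ≃ₜ E} {L : E ≃L[𝕜] E} {a : ℝ} (ha : 0 < a)
    (h0 : h 0 = 0) (hL : HasFDerivAt h.symm (L.symm : E →L[𝕜] E) 0)
    (hbd : ∀ᶠ z in 𝓝 0, a * ‖z‖ ≤ ‖h z‖) : ‖(L.symm : E →L[𝕜] E)‖ ≤ a⁻¹ := by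
  have hsymm0 : h.symm 0 = 0 := by rw [h.symm_apply_eq, h0]
  have hlim : Tendsto h.symm (𝓝 0) (𝓝 0) := by
    simpa only [hsymm0] using h.symm.continuous.tendsto 0
  refine hL.le_of_lip' (inv_pos.2 ha).le ?_
  filter_upwards [hlim.eventually hbd] with w hw
  rw [h.apply_symm_apply] at hw
  rw [hsymm0, sub_zero, sub_zero]
  exact (le_inv_mul_iff₀ ha).2 hw

end LinearPart

theorem IsAutomorphism.exists_homeomorph {k : ℕ} {F : Ck k → Ck k} (hF : IsAutomorphism F) :
    ∃ h : Ck k ≃ₜ Ck k, ⇑h = F ∧ Differentiable ℂ h ∧ Differentiable ℂ h.symm := by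
  obtain ⟨hd, G, hG, hleft, hright⟩ := hF
  exact ⟨⟨⟨F, G, hleft, hright⟩, hd.continuous, hG.continuous⟩, rfl, hd, hG⟩

theorem basin_square_biholo_general {E : Type*} [NormedAddCommGroup E] [NormedSpace ℂ E]
    [CompleteSpace E] {f : ℕ → E ≃ₜ E} (hf : ∀ n, Differentiable ℂ (f n))
    (hf_symm : ∀ n, Differentiable ℂ (f n).symm) {a b : ℝ} (hb₀ : 0 ≤ b) (hb₁ : b < 1)
    (hsq : b ^ 2 < a) (hbd : ∀ n, ∀ z ∈ ball (0 : E) 1, a * ‖z‖ ≤ ‖f n z‖ ∧ ‖f n z‖ ≤ b * ‖z‖) :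
    BiholoToSpace (basin fun n => f n) := by
  have ha : 0 < a := (sq_nonneg b).trans_lt hsq
  have hfix : ∀ n, f n 0 = 0 := fun n => by simpa using (hbd n 0 (mem_ball_self one_pos)).2
  choose A hA hA_symm using fun n =>
    exists_continuousLinearEquiv_hasFDerivAt (f n) (hf n 0) (hf_symm n (f n 0))
  have hcontr : IsContractingSequence (fun n => f n) A b a⁻¹ :=
    { nonneg := hb₀
      lt_one := hb₁
      differentiableOn := fun n => (hf n).differentiableOn
      norm_le := fun n z hz => (hbd n z hz).2
      hasFDerivAt := hA
      norm_symm_le := fun n => norm_symm_linear_le_inv ha (hfix n) (hfix n ▸ hA_symm n)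
        (eventually_of_mem (ball_mem_nhds 0 one_pos) fun z hz => (hbd n z hz).1) }
  exact hcontr.biholoToSpace_basin ((mul_inv_lt_iff₀ ha).2 (by rwa [one_mul])) hf hf_symm

/-- **Theorem (square).** Let `f_0, f_1, …` be automorphisms of `ℂ^k` fixing the origin and
`0 < a < b < 1` with `b² < a` and `a‖z‖ ≤ ‖f_n z‖ ≤ b‖z‖` on the unit ball. Then the basin of
attraction is biholomorphic to `ℂ^k`. -/
theorem basin_square_biholo (k : ℕ) (f : ℕ → Ck k → Ck k)
    (hauto : ∀ n, IsAutomorphism (f n)) (hfix : ∀ n, f n 0 = 0)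
    (a b : ℝ) (ha : 0 < a) (hab : a < b) (hb : b < 1) (hsq : b ^ 2 < a)
    (hbd : ∀ n, ∀ z ∈ ball (0 : Ck k) 1,
      a * ‖z‖ ≤ ‖f n z‖ ∧ ‖f n z‖ ≤ b * ‖z‖) :
    BiholoToC {z : Ck k | Tendsto (fun n => seqComp f n z) atTop (𝓝 0)} := by
  choose h hcoe hdiff hdiff_symm using fun n => (hauto n).exists_homeomorph
  obtain rfl : (fun n => ⇑(h n)) = f := funext hcoe
  exact basin_square_biholo_general hdiff hdiff_symm (ha.trans hab).le hb hsq hbd
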